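/- Consider a zero-sum game given by a payoff matrix R ∈ ℝ^{n×n} with all entries in (0,1] that possesses a unique Nash equilibrium (x*,y*). Then there exists η₀ ∈ (0,1) such that for every learning rate η ∈ (0,η₀) there exists ξ₀ ∈ (0, 1/η) such that for every ξ ∈ [ξ₀, 1/η) (so that ηξ < 1), the FLBR-MWU iterates (x^t,y^t), started from the profile in which both players play the uniform distribution (1/n,…,1/n), converge to the Nash equilibrium: lim_{t→∞} (x^t,y^t) = (x*,y*). -/

import Mathlib

open Finset Real Filter

/-- A probability vector (mixed strategy) on `Fin n`. -/
def IsProbVec {n : ℕ} (x : Fin n → ℝ) : Prop := (∀ i, 0 ≤ x i) ∧ ∑ i, x i = 1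

/-- A fully mixed strategy: all coordinates strictly positive. -/
def FullyMixed {n : ℕ} (x : Fin n → ℝ) : Prop := ∀ i, 0 < x i

/-- Expected payoff of the row player, `xᵀ R y`. -/
def payoff {n : ℕ} (R : Matrix (Fin n) (Fin n) ℝ) (x y : Fin n → ℝ) : ℝ :=
  ∑ i, ∑ j, x i * R i j * y j

/-- `e_iᵀ R y`, the payoff of pure row strategy `i` against `y`. -/
def rowPayoff {n : ℕ} (R : Matrix (Fin n) (Fin n) ℝ) (y : Fin n → ℝ) (i : Fin n) : ℝ :=
  ∑ j, R i j * y j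

/-- `xᵀ R e_j`, the (row player's) payoff when the column player plays pure strategy `j`. -/
def colPayoff {n : ℕ} (R : Matrix (Fin n) (Fin n) ℝ) (x : Fin n → ℝ) (j : Fin n) : ℝ :=
  ∑ i, x i * R i j

/-- `(x, y)` is a Nash equilibrium of the zero-sum game with payoff matrix `R`. -/
def IsNash {n : ℕ} (R : Matrix (Fin n) (Fin n) ℝ) (x y : Fin n → ℝ) : Prop :=
  IsProbVec x ∧ IsProbVec y ∧ (∀ i, rowPayoff R y i ≤ payoff R x y) ∧
    (∀ j, payoff R x y ≤ colPayoff R x j)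

/-- `(x, y)` is an `ε`-Nash equilibrium. -/
def IsEpsNash {n : ℕ} (R : Matrix (Fin n) (Fin n) ℝ) (x y : Fin n → ℝ) (ε : ℝ) : Prop :=
  (∀ i, rowPayoff R y i ≤ payoff R x y + ε) ∧ (∀ j, payoff R x y - ε ≤ colPayoff R x j)

/-- Intermediate (IBR) strategy of the row player:
`x̂ᵢ = xᵢ e^{ξ (Ry)ᵢ} / ∑ⱼ xⱼ e^{ξ (Ry)ⱼ}`. -/
noncomputable def brX {n : ℕ} (ξ : ℝ) (R : Matrix (Fin n) (Fin n) ℝ) (x y : Fin n → ℝ) :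
    Fin n → ℝ :=
  fun i => x i * Real.exp (ξ * rowPayoff R y i) / ∑ j, x j * Real.exp (ξ * rowPayoff R y j)

/-- Intermediate (IBR) strategy of the column player:
`ŷⱼ = yⱼ e^{-ξ (Rᵀx)ⱼ} / ∑ₖ yₖ e^{-ξ (Rᵀx)ₖ}`. -/
noncomputable def brY {n : ℕ} (ξ : ℝ) (R : Matrix (Fin n) (Fin n) ℝ) (x y : Fin n → ℝ) :
    Fin n → ℝ :=
  fun j => y j * Real.exp (-(ξ * colPayoff R x j)) / ∑ k, y k * Real.exp (-(ξ * colPayoff R x k))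

/-- Multiplicative-weights update of the row player against the (intermediate) strategy `yh`. -/
noncomputable def mwuX {n : ℕ} (η : ℝ) (R : Matrix (Fin n) (Fin n) ℝ) (x yh : Fin n → ℝ) :
    Fin n → ℝ :=
  fun i => x i * Real.exp (η * rowPayoff R yh i) / ∑ j, x j * Real.exp (η * rowPayoff R yh j)

/-- Multiplicative-weights update of the column player against the (intermediate) strategy `xh`. -/
noncomputable def mwuY {n : ℕ} (η : ℝ) (R : Matrix (Fin n) (Fin n) ℝ) (y xh : Fin n → ℝ) :
    Fin n → ℝ :=
  fun j => y j * Real.exp (-(η * colPayoff R xh j)) / ∑ k, y k * Real.exp (-(η * colPayoff R xh k))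

/-- One full step of the FLBR-MWU dynamics with update rate `η` and intermediate rate `ξ`. -/
noncomputable def flbrStep {n : ℕ} (η ξ : ℝ) (R : Matrix (Fin n) (Fin n) ℝ)
    (p : (Fin n → ℝ) × (Fin n → ℝ)) : (Fin n → ℝ) × (Fin n → ℝ) :=
  (mwuX η R p.1 (brY ξ R p.1 p.2), mwuY η R p.2 (brX ξ R p.1 p.2))

/-- Kullback–Leibler divergence `∑ᵢ xsᵢ ln(xsᵢ / xᵢ)` (with the convention `0 · ln 0 = 0`). -/
noncomputable def klDiv {n : ℕ} (xs x : Fin n → ℝ) : ℝ := ∑ i, xs i * Real.log (xs i / x i)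

/-- KL divergence of the profile `(x, y)` from `(xs, ys)`. -/
noncomputable def klProfile {n : ℕ} (xs ys x y : Fin n → ℝ) : ℝ := klDiv xs x + klDiv ys y

/-- Exponential tilting of the strategy `x` in direction `u`. -/
noncomputable def tiltV {n : ℕ} (a : ℝ) (x u : Fin n → ℝ) : Fin n → ℝ :=
  fun i => x i * Real.exp (a * u i) / ∑ j, x j * Real.exp (a * u j)

/-- Fully mixed probability vector. -/
def PosVec {n : ℕ} (x : Fin n → ℝ) : Prop := (∀ i, 0 < x i) ∧ ∑ i, x i = 1

lemma PosVec.isProb {n : ℕ} {x : Fin n → ℝ} (h : PosVec x) : IsProbVec x :=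
  ⟨fun i => (h.1 i).le, h.2⟩

lemma IsProbVec.univ_nonempty {n : ℕ} {x : Fin n → ℝ} (h : IsProbVec x) :
    (Finset.univ : Finset (Fin n)).Nonempty := by
  by_contra hc
  rw [Finset.not_nonempty_iff_eq_empty] at hc
  have := h.2
  rw [hc] at this
  simp at this

lemma tilt_Z_pos {n : ℕ} {x : Fin n → ℝ} (h : PosVec x) (a : ℝ) (u : Fin n → ℝ) :
    0 < ∑ j, x j * Real.exp (a * u j) :=
  Finset.sum_pos (fun i _ => mul_pos (h.1 i) (Real.exp_pos _)) h.isProb.univ_nonempty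

lemma tilt_pos {n : ℕ} {x : Fin n → ℝ} (h : PosVec x) (a : ℝ) (u : Fin n → ℝ) :
    PosVec (tiltV a x u) := by
  have hZ := tilt_Z_pos h a u
  refine ⟨fun i => div_pos (mul_pos (h.1 i) (Real.exp_pos _)) hZ, ?_⟩
  simp only [tiltV]
  rw [← Finset.sum_div, div_self hZ.ne']

lemma mean_sub_zero {n : ℕ} {x : Fin n → ℝ} (h : IsProbVec x) (u : Fin n → ℝ) :
    ∑ i, x i * (u i - ∑ k, x k * u k) = 0 := by
  simp only [mul_sub]
  rw [Finset.sum_sub_distrib, ← Finset.sum_mul, h.2]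
  ring

lemma logZ_le {n : ℕ} {x : Fin n → ℝ} (h : PosVec x) (u : Fin n → ℝ) (η : ℝ) (h0 : 0 ≤ η)
    (h1 : η ≤ 1) (hu : ∀ i, |u i - ∑ k, x k * u k| ≤ 1) :
    Real.log (∑ j, x j * Real.exp (η * u j)) ≤
      η * (∑ k, x k * u k) + η ^ 2 * ∑ i, x i * (u i - ∑ k, x k * u k) ^ 2 := by
  have hm := mean_sub_zero h.isProb u
  set m := ∑ k, x k * u k with hmdef
  have hZ := tilt_Z_pos h η u
  rw [Real.log_le_iff_le_exp hZ, Real.exp_add]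
  have e1 : ∑ j, x j * Real.exp (η * u j) =
      Real.exp (η * m) * ∑ j, x j * Real.exp (η * (u j - m)) := by
    rw [Finset.mul_sum]
    refine Finset.sum_congr rfl fun i _ => ?_
    rw [show η * u i = η * m + η * (u i - m) by ring, Real.exp_add]
    ring
  rw [e1]
  refine mul_le_mul_of_nonneg_left ?_ (Real.exp_pos _).le
  have e2 : ∑ j, x j * Real.exp (η * (u j - m)) ≤
      ∑ j, (x j + η * (x j * (u j - m)) + η ^ 2 * (x j * (u j - m) ^ 2)) := by
    refine Finset.sum_le_sum fun i _ => ?_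
    have hs : |η * (u i - m)| ≤ 1 := by
      rw [abs_mul, abs_of_nonneg h0]
      exact mul_le_one₀ h1 (abs_nonneg _) (hu i)
    have := (abs_le.1 (Real.abs_exp_sub_one_sub_id_le hs)).2
    have h3 := mul_le_mul_of_nonneg_left this (h.1 i).le
    nlinarith
  refine e2.trans ?_
  rw [Finset.sum_add_distrib, Finset.sum_add_distrib, ← Finset.mul_sum, ← Finset.mul_sum, hm, h.2]
  have := Real.add_one_le_exp (η ^ 2 * ∑ i, x i * (u i - m) ^ 2)
  linarith

lemma var_split {n : ℕ} {x : Fin n → ℝ} (h : IsProbVec x) (u w : Fin n → ℝ) (δ : ℝ)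
    (hd : ∀ i, |w i - u i| ≤ δ / 2) :
    ∑ i, x i * (w i - ∑ k, x k * w k) ^ 2 ≤
      2 * ∑ i, x i * (u i - ∑ k, x k * u k) ^ 2 + δ ^ 2 / 2 := by
  set mu := ∑ k, x k * u k with hmu
  set mw := ∑ k, x k * w k with hmw
  have hh : ∑ i, x i * ((w i - u i) - (mw - mu)) ^ 2 ≤ δ ^ 2 / 4 := by
    have e : ∑ i, x i * ((w i - u i) - (mw - mu)) ^ 2 =
        ∑ i, x i * (w i - u i) ^ 2 - (mw - mu) ^ 2 := by
      have : ∀ i, x i * ((w i - u i) - (mw - mu)) ^ 2 =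
        x i * (w i - u i) ^ 2 - 2 * (mw - mu) * (x i * w i - x i * u i) + (mw - mu) ^ 2 * x i := by
        intro i; ring
      simp only [this]
      rw [Finset.sum_add_distrib, Finset.sum_sub_distrib, ← Finset.mul_sum, ← Finset.mul_sum,
        Finset.sum_sub_distrib, ← hmw, ← hmu, h.2]
      ring
    have e2 : ∑ i, x i * (w i - u i) ^ 2 ≤ ∑ i, x i * (δ ^ 2 / 4) := by
      refine Finset.sum_le_sum fun i _ => mul_le_mul_of_nonneg_left ?_ (h.1 i)
      have := abs_le.1 (hd i)
      nlinarith
    rw [← Finset.sum_mul, h.2] at e2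
    nlinarith [sq_nonneg (mw - mu)]
  have : ∑ i, x i * (w i - mw) ^ 2 ≤
      ∑ i, (2 * (x i * (u i - mu) ^ 2) + 2 * (x i * ((w i - u i) - (mw - mu)) ^ 2)) := by
    refine Finset.sum_le_sum fun i _ => ?_
    have h2 := mul_nonneg (h.1 i) (sq_nonneg ((u i - mu) - ((w i - u i) - (mw - mu))))
    nlinarith
  rw [Finset.sum_add_distrib, ← Finset.mul_sum, ← Finset.mul_sum] at this
  linarith

lemma log_ineq (p q : ℝ) (hp : 0 < p) (hq : 0 < q) :
    2 * (p - q) ^ 2 / (p + q) ≤ (p - q) * (Real.log p - Real.log q) := by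
  wlog hpq : q ≤ p generalizing p q
  · have := this q p hq hp (le_of_not_ge hpq)
    rw [add_comm p q]
    calc _ = 2 * (q - p) ^ 2 / (q + p) := by ring
      _ ≤ _ := this
      _ = _ := by ring
  rcases hpq.eq_or_lt with e | hlt
  · subst e; simp
  have hx : 0 < (p - q) / q := div_pos (by linarith) hq
  have := (Real.lt_log_one_add_of_pos hx).le
  have e1 : 1 + (p - q) / q = p / q := by field_simp; ring
  have e2 : 2 * ((p - q) / q) / ((p - q) / q + 2) = 2 * (p - q) / (p + q) := by
    field_simp; ring
  rw [e1, e2, Real.log_div hp.ne' hq.ne'] at this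
  have h3 := mul_le_mul_of_nonneg_left this (by linarith : 0 ≤ p - q)
  calc _ = (p - q) * (2 * (p - q) / (p + q)) := by ring
    _ ≤ _ := h3

lemma tilt_gain_l1 {n : ℕ} {x : Fin n → ℝ} (h : PosVec x) (u : Fin n → ℝ) (ξ : ℝ) :
    (∑ i, |tiltV ξ x u i - x i|) ^ 2 ≤ ξ * ∑ i, (tiltV ξ x u i - x i) * u i := by
  have hp := tilt_pos h ξ u
  have hZ := tilt_Z_pos h ξ u
  have hlog : ∀ i, Real.log (tiltV ξ x u i) - Real.log (x i) =
      ξ * u i - Real.log (∑ j, x j * Real.exp (ξ * u j)) := by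
    intro i
    simp only [tiltV]
    rw [Real.log_div (mul_pos (h.1 i) (Real.exp_pos _)).ne' hZ.ne',
      Real.log_mul (h.1 i).ne' (Real.exp_pos _).ne', Real.log_exp]
    ring
  set p := tiltV ξ x u with hpdef
  set L := Real.log (∑ j, x j * Real.exp (ξ * u j))
  have e1 : ξ * ∑ i, (p i - x i) * u i = ∑ i, (p i - x i) * (Real.log (p i) - Real.log (x i)) := by
    simp only [hlog, mul_sub]
    rw [Finset.sum_sub_distrib, ← Finset.sum_mul, Finset.sum_sub_distrib, hp.2, h.2, Finset.mul_sum]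
    simp only [sub_self, zero_mul, sub_zero]
    exact Finset.sum_congr rfl fun i _ => by ring
  rw [e1]
  have e2 : ∑ i, 2 * (p i - x i) ^ 2 / (p i + x i) ≤
      ∑ i, (p i - x i) * (Real.log (p i) - Real.log (x i)) :=
    Finset.sum_le_sum fun i _ => log_ineq _ _ (hp.1 i) (h.1 i)
  refine le_trans ?_ e2
  have cs := Finset.sum_sq_le_sum_mul_sum_of_sq_le_mul Finset.univ
    (r := fun i => |p i - x i|) (f := fun i => (p i - x i) ^ 2 / (p i + x i))
    (g := fun i => p i + x i)
    (fun i _ => div_nonneg (sq_nonneg _) (add_pos (hp.1 i) (h.1 i)).le)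
    (fun i _ => (add_pos (hp.1 i) (h.1 i)).le)
    (fun i _ => by rw [sq_abs, div_mul_cancel₀ _ (add_pos (hp.1 i) (h.1 i)).ne'])
  rw [Finset.sum_add_distrib (f := p), hp.2, h.2] at cs
  refine cs.trans (le_of_eq ?_)
  rw [Finset.sum_mul]
  exact Finset.sum_congr rfl fun i _ => by ring

lemma chebyshev_exp {n : ℕ} (q u : Fin n → ℝ) (hq : ∀ i, 0 ≤ q i) (a : ℝ) (ha : 0 ≤ a) :
    (∑ i, q i * Real.exp (a * u i)) * (∑ i, q i * u i) ≤
      (∑ i, q i * Real.exp (a * u i) * u i) * ∑ i, q i := by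
  have key : 0 ≤ ∑ i, ∑ j, q i * q j *
      ((Real.exp (a * u i) - Real.exp (a * u j)) * (u i - u j)) := by
    refine Finset.sum_nonneg fun i _ => Finset.sum_nonneg fun j _ =>
      mul_nonneg (mul_nonneg (hq i) (hq j)) ?_
    rcases le_total (u i) (u j) with hle | hle
    · have := Real.exp_le_exp.2 (mul_le_mul_of_nonneg_left hle ha)
      nlinarith
    · have := Real.exp_le_exp.2 (mul_le_mul_of_nonneg_left hle ha)
      nlinarith
  have e : ∑ i, ∑ j, q i * q j * ((Real.exp (a * u i) - Real.exp (a * u j)) * (u i - u j)) =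
      2 * ((∑ i, q i * Real.exp (a * u i) * u i) * ∑ i, q i) -
      2 * ((∑ i, q i * Real.exp (a * u i)) * (∑ i, q i * u i)) := by
    have : ∀ i j, q i * q j * ((Real.exp (a * u i) - Real.exp (a * u j)) * (u i - u j)) =
      (q i * Real.exp (a * u i) * u i) * q j + q i * (q j * Real.exp (a * u j) * u j)
      - (q i * Real.exp (a * u i)) * (q j * u j) - (q i * u i) * (q j * Real.exp (a * u j)) := by
      intro i j; ring
    simp only [this, Finset.sum_sub_distrib, Finset.sum_add_distrib, ← Finset.mul_sum,
      ← Finset.sum_mul]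
    ring
  linarith

lemma exp_mul_ge (s : ℝ) (hs : |s| ≤ 1) : s + s ^ 2 / 3 ≤ Real.exp s * s := by
  have hb := abs_le.1 hs
  rcases le_total 0 s with h | h
  · have := Real.add_one_le_exp s
    nlinarith
  · have h1 : Real.exp s * (1 - s) ≤ 1 := by
      have := Real.add_one_le_exp (-s)
      have h2 : Real.exp s * Real.exp (-s) = 1 := by rw [← Real.exp_add]; simp
      nlinarith [Real.exp_pos s]
    have h3 : Real.exp s ≤ 1 + s / 2 := by nlinarith [Real.exp_pos s]
    nlinarith

lemma tilt_gain_var {n : ℕ} {x : Fin n → ℝ} (h : PosVec x) (u : Fin n → ℝ) (ξ : ℝ) (hξ : 1 ≤ ξ)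
    (hu : ∀ i, |u i - ∑ k, x k * u k| ≤ 1) :
    (∑ i, x i * (u i - ∑ k, x k * u k) ^ 2) / 9 ≤ ∑ i, (tiltV ξ x u i - x i) * u i := by
  have hm := mean_sub_zero h.isProb u
  set m := ∑ k, x k * u k with hmdef
  have hp := tilt_pos h ξ u
  have hZ := tilt_Z_pos h ξ u
  set V := ∑ i, x i * (u i - m) ^ 2 with hV
  have hV0 : 0 ≤ V := Finset.sum_nonneg fun i _ => mul_nonneg (h.1 i).le (sq_nonneg _)
  -- shift
  set s : Fin n → ℝ := fun i => u i - m with hs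
  have hZs := tilt_Z_pos h ξ s
  have e1 : ∀ i, tiltV ξ x u i = tiltV ξ x s i := by
    intro i
    simp only [tiltV]
    have : ∀ j, x j * Real.exp (ξ * u j) = Real.exp (ξ * m) * (x j * Real.exp (ξ * s j)) := by
      intro j
      rw [show ξ * u j = ξ * m + ξ * s j by simp only [hs]; ring, Real.exp_add]
      ring
    simp only [this]
    rw [← Finset.mul_sum, mul_div_mul_left _ _ (Real.exp_pos _).ne']
  have e2 : ∑ i, (tiltV ξ x u i - x i) * u i = ∑ i, tiltV ξ x s i * s i := by
    have : ∀ i, (tiltV ξ x u i - x i) * u i = tiltV ξ x s i * s i + m * tiltV ξ x s i - x i * u i := by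
      intro i; rw [e1]; simp only [hs]; ring
    simp only [this]
    rw [Finset.sum_sub_distrib, Finset.sum_add_distrib, ← Finset.mul_sum, (tilt_pos h ξ s).2, ← hmdef]
    ring
  rw [e2]
  have e3 : ∑ i, tiltV ξ x s i * s i =
      (∑ i, x i * Real.exp (ξ * s i) * s i) / ∑ j, x j * Real.exp (ξ * s j) := by
    rw [Finset.sum_div]
    refine Finset.sum_congr rfl fun i _ => ?_
    simp only [tiltV]; ring
  rw [e3, le_div_iff₀ hZs]
  have ch := chebyshev_exp (fun i => x i * Real.exp (s i)) s
    (fun i => (mul_pos (h.1 i) (Real.exp_pos _)).le) (ξ - 1) (by linarith)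
  have e4 : ∀ i, x i * Real.exp (s i) * Real.exp ((ξ - 1) * s i) = x i * Real.exp (ξ * s i) := by
    intro i; rw [mul_assoc, ← Real.exp_add]; congr 2; ring
  simp only [e4] at ch
  have hA : V / 3 ≤ ∑ i, x i * Real.exp (s i) * s i := by
    have : ∑ i, (x i * s i + x i * s i ^ 2 / 3) ≤ ∑ i, x i * Real.exp (s i) * s i := by
      refine Finset.sum_le_sum fun i _ => ?_
      have := mul_le_mul_of_nonneg_left (exp_mul_ge (s i) (hu i)) (h.1 i).le
      linarith
    rw [Finset.sum_add_distrib, hm, ← Finset.sum_div] at this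
    linarith
  have hB : ∑ i, x i * Real.exp (s i) ≤ 3 := by
    have : ∑ i, x i * Real.exp (s i) ≤ ∑ i, x i * 3 := by
      refine Finset.sum_le_sum fun i _ => mul_le_mul_of_nonneg_left ?_ (h.1 i).le
      have h1 := Real.exp_le_exp.2 (abs_le.1 (hu i)).2
      have := Real.exp_one_lt_d9
      simp only [hs]; linarith
    rw [← Finset.sum_mul, h.2] at this
    linarith
  have hBpos : 0 < ∑ i, x i * Real.exp (s i) := by
    have := tilt_Z_pos h 1 s
    simpa using this
  set Zs := ∑ j, x j * Real.exp (ξ * s j)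
  set N := ∑ i, x i * Real.exp (ξ * s i) * s i
  have h5 : Zs * (V / 3) ≤ N * ∑ i, x i * Real.exp (s i) :=
    (mul_le_mul_of_nonneg_left hA hZs.le).trans ch
  have hN : 0 ≤ N := by
    by_contra hc
    push Not at hc
    have : N * ∑ i, x i * Real.exp (s i) < 0 := mul_neg_of_neg_of_pos hc hBpos
    have : 0 ≤ Zs * (V / 3) := by positivity
    linarith
  nlinarith [mul_le_mul_of_nonneg_left hB hN]

lemma rp_sub {n : ℕ} (R : Matrix (Fin n) (Fin n) ℝ) (y z : Fin n → ℝ) (i : Fin n) :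
    rowPayoff R (fun j => y j - z j) i = rowPayoff R y i - rowPayoff R z i := by
  simp only [rowPayoff, mul_sub, Finset.sum_sub_distrib]

lemma rp_add_mul {n : ℕ} (R : Matrix (Fin n) (Fin n) ℝ) (y z : Fin n → ℝ) (a : ℝ) (i : Fin n) :
    rowPayoff R (fun j => y j + a * z j) i = rowPayoff R y i + a * rowPayoff R z i := by
  simp only [rowPayoff, mul_add, Finset.sum_add_distrib, Finset.mul_sum]
  congr 1
  exact Finset.sum_congr rfl fun j _ => by ring

lemma rp_mul {n : ℕ} (R : Matrix (Fin n) (Fin n) ℝ) (z : Fin n → ℝ) (a : ℝ) (i : Fin n) :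
    rowPayoff R (fun j => a * z j) i = a * rowPayoff R z i := by
  simp only [rowPayoff, Finset.mul_sum]
  exact Finset.sum_congr rfl fun j _ => by ring

lemma rp_sum {n : ℕ} (R : Matrix (Fin n) (Fin n) ℝ) (y : ℕ → Fin n → ℝ) (T : ℕ) (i : Fin n) :
    rowPayoff R (fun j => ∑ t ∈ Finset.range T, y t j) i =
      ∑ t ∈ Finset.range T, rowPayoff R (y t) i := by
  simp only [rowPayoff, Finset.mul_sum]
  exact Finset.sum_comm

lemma rp_abs {n : ℕ} (R : Matrix (Fin n) (Fin n) ℝ) (c : ℝ) (hR : ∀ i j, |R i j - c| ≤ 1 / 2)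
    (d : Fin n → ℝ) (i : Fin n) :
    |rowPayoff R d i - c * ∑ j, d j| ≤ (∑ j, |d j|) / 2 := by
  have e : rowPayoff R d i - c * ∑ j, d j = ∑ j, (R i j - c) * d j := by
    simp only [rowPayoff, Finset.mul_sum]
    rw [← Finset.sum_sub_distrib]
    exact Finset.sum_congr rfl fun j _ => by ring
  rw [e]
  refine (Finset.abs_sum_le_sum_abs _ _).trans ?_
  rw [Finset.sum_div]
  refine Finset.sum_le_sum fun j _ => ?_
  rw [abs_mul]
  have := mul_le_mul_of_nonneg_right (hR i j) (abs_nonneg (d j))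
  linarith

lemma rp_center {n : ℕ} (R : Matrix (Fin n) (Fin n) ℝ) (c : ℝ) (hR : ∀ i j, |R i j - c| ≤ 1 / 2)
    {x y : Fin n → ℝ} (hx : IsProbVec x) (hy : IsProbVec y) (i : Fin n) :
    |rowPayoff R y i - ∑ k, x k * rowPayoff R y k| ≤ 1 := by
  have h1 : ∀ i, |rowPayoff R y i - c| ≤ 1 / 2 := by
    intro i
    have := rp_abs R c hR y i
    rw [hy.2] at this
    have e : ∑ j, |y j| = 1 := by
      rw [← hy.2]; exact Finset.sum_congr rfl fun j _ => abs_of_nonneg (hy.1 j)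
    rw [e] at this
    simpa using this
  have h2 : |∑ k, x k * rowPayoff R y k - c| ≤ 1 / 2 := by
    have e : ∑ k, x k * rowPayoff R y k - c = ∑ k, x k * (rowPayoff R y k - c) := by
      simp only [mul_sub, Finset.sum_sub_distrib]
      rw [← Finset.sum_mul, hx.2]; ring
    rw [e]
    refine (Finset.abs_sum_le_sum_abs _ _).trans ?_
    have : ∑ k, |x k * (rowPayoff R y k - c)| ≤ ∑ k, x k * (1 / 2) := by
      refine Finset.sum_le_sum fun k _ => ?_
      rw [abs_mul, abs_of_nonneg (hx.1 k)]
      exact mul_le_mul_of_nonneg_left (h1 k) (hx.1 k)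
    rw [← Finset.sum_mul, hx.2] at this
    linarith
  have a := abs_le.1 (h1 i)
  have b := abs_le.1 h2
  rw [abs_le]
  constructor <;> linarith

/-- The transposed game seen as a game of the second player. -/
def dualG {n : ℕ} (R : Matrix (Fin n) (Fin n) ℝ) : Matrix (Fin n) (Fin n) ℝ := fun i j => - R j i

lemma rp_dual {n : ℕ} (R : Matrix (Fin n) (Fin n) ℝ) (x : Fin n → ℝ) (j : Fin n) :
    rowPayoff (dualG R) x j = - colPayoff R x j := by
  simp only [rowPayoff, dualG, colPayoff]
  rw [← Finset.sum_neg_distrib]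
  exact Finset.sum_congr rfl fun i _ => by ring

lemma payoff_row {n : ℕ} (R : Matrix (Fin n) (Fin n) ℝ) (x y : Fin n → ℝ) :
    payoff R x y = ∑ i, x i * rowPayoff R y i := by
  simp only [payoff, rowPayoff, Finset.mul_sum]
  exact Finset.sum_congr rfl fun i _ => Finset.sum_congr rfl fun j _ => by ring

lemma payoff_dual {n : ℕ} (R : Matrix (Fin n) (Fin n) ℝ) (x y : Fin n → ℝ) :
    ∑ j, y j * rowPayoff (dualG R) x j = - payoff R x y := by
  simp only [payoff, rowPayoff, dualG, Finset.mul_sum]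
  rw [Finset.sum_comm, ← Finset.sum_neg_distrib]
  refine Finset.sum_congr rfl fun i _ => ?_
  rw [← Finset.sum_neg_distrib]
  exact Finset.sum_congr rfl fun j _ => by ring

/-- Variance of `u` under `x`. -/
noncomputable def varV {n : ℕ} (x u : Fin n → ℝ) : ℝ :=
  ∑ i, x i * (u i - ∑ k, x k * u k) ^ 2

lemma varV_nonneg {n : ℕ} {x : Fin n → ℝ} (h : IsProbVec x) (u : Fin n → ℝ) : 0 ≤ varV x u :=
  Finset.sum_nonneg fun i _ => mul_nonneg (h.1 i) (sq_nonneg _)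

lemma half_step {n : ℕ} (R : Matrix (Fin n) (Fin n) ℝ) (c : ℝ) (hR : ∀ i j, |R i j - c| ≤ 1 / 2)
    {x y z : Fin n → ℝ} (hx : PosVec x) (hy : IsProbVec y) (hz : IsProbVec z) (η : ℝ)
    (h0 : 0 ≤ η) (h1 : η ≤ 1) :
    Real.log (∑ j, x j * Real.exp (η * rowPayoff R z j)) ≤
      η * payoff R x z + η ^ 2 * (2 * varV x (rowPayoff R y) + (∑ j, |z j - y j|) ^ 2 / 2) := by
  have a := logZ_le hx (rowPayoff R z) η h0 h1 (rp_center R c hR hx.isProb hz)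
  have b := var_split hx.isProb (rowPayoff R y) (rowPayoff R z) (∑ j, |z j - y j|) (by
    intro i
    have := rp_abs R c hR (fun j => z j - y j) i
    rw [Finset.sum_sub_distrib, hz.2, hy.2, rp_sub] at this
    simpa using this)
  rw [payoff_row]
  refine a.trans ?_
  have := mul_le_mul_of_nonneg_left b (sq_nonneg η)
  simp only [varV]
  linarith

lemma key_step {n : ℕ} (R : Matrix (Fin n) (Fin n) ℝ) (hR : ∀ i j, 0 < R i j ∧ R i j ≤ 1)
    {x y : Fin n → ℝ} (hx : PosVec x) (hy : PosVec y) (η ξ : ℝ) (h0 : 0 < η) (h1 : η < 1 / 1000)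
    (hξ0 : 1 / (2 * η) ≤ ξ) (hξ1 : ξ < 1 / η) :
    Real.log (∑ j, x j * Real.exp (η * rowPayoff R (tiltV ξ y (rowPayoff (dualG R) x)) j)) +
    Real.log (∑ j, y j * Real.exp (η * rowPayoff (dualG R) (tiltV ξ x (rowPayoff R y)) j)) ≤
    - η ^ 2 * (varV x (rowPayoff R y) + varV y (rowPayoff (dualG R) x)) := by
  have hR1 : ∀ i j, |R i j - 1 / 2| ≤ 1 / 2 := by
    intro i j; rw [abs_le]; have := hR i j; constructor <;> linarith
  have hR2 : ∀ i j, |dualG R i j - (-1 / 2)| ≤ 1 / 2 := by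
    intro i j; rw [abs_le]; have := hR j i; simp only [dualG]; constructor <;> linarith
  have hxh := tilt_pos hx ξ (rowPayoff R y)
  have hyh := tilt_pos hy ξ (rowPayoff (dualG R) x)
  have hηξ : η * ξ < 1 := by
    rw [lt_div_iff₀ h0] at hξ1; linarith
  have hηξ2 : 1 ≤ 2 * η * ξ := by
    rw [div_le_iff₀ (by positivity)] at hξ0; linarith
  have hξge : 500 ≤ ξ := by nlinarith
  have a1 := half_step R (1 / 2) hR1 hx hy.isProb hyh.isProb η h0.le (by linarith)
  have a2 := half_step (dualG R) (-1 / 2) hR2 hy hx.isProb hxh.isProb η h0.le (by linarith)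
  have g1 := tilt_gain_l1 hx (rowPayoff R y) ξ
  have g2 := tilt_gain_l1 hy (rowPayoff (dualG R) x) ξ
  have v1 := tilt_gain_var hx (rowPayoff R y) ξ (by linarith)
    (rp_center R _ hR1 hx.isProb hy.isProb)
  have v2 := tilt_gain_var hy (rowPayoff (dualG R) x) ξ (by linarith)
    (rp_center (dualG R) _ hR2 hy.isProb hx.isProb)
  have V1 := varV_nonneg hx.isProb (rowPayoff R y)
  have V2 := varV_nonneg hy.isProb (rowPayoff (dualG R) x)
  change varV x (rowPayoff R y) / 9 ≤ _ at v1
  change varV y (rowPayoff (dualG R) x) / 9 ≤ _ at v2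
  set xh := tiltV ξ x (rowPayoff R y)
  set yh := tiltV ξ y (rowPayoff (dualG R) x)
  have e1 : ∑ i, (xh i - x i) * rowPayoff R y i = payoff R xh y - payoff R x y := by
    simp only [sub_mul, Finset.sum_sub_distrib, ← payoff_row]
  have e2 : ∑ i, (yh i - y i) * rowPayoff (dualG R) x i = payoff R x y - payoff R x yh := by
    simp only [sub_mul, Finset.sum_sub_distrib, payoff_dual]
    ring
  have e3 : payoff (dualG R) y xh = - payoff R xh y := by
    rw [payoff_row, payoff_dual]
  rw [e1] at g1 v1
  rw [e2] at g2 v2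
  rw [e3] at a2
  set A := payoff R xh y - payoff R x y with hA
  set B := payoff R x y - payoff R x yh with hB
  set W1 := varV x (rowPayoff R y)
  set W2 := varV y (rowPayoff (dualG R) x)
  set D1 := (∑ i, |xh i - x i|) ^ 2
  set D2 := (∑ i, |yh i - y i|) ^ 2
  have hA0 : 0 ≤ A := by linarith
  have hB0 : 0 ≤ B := by linarith
  have t1 : η ^ 2 * D1 ≤ η * A := by
    calc η ^ 2 * D1 ≤ η ^ 2 * (ξ * A) := mul_le_mul_of_nonneg_left g1 (sq_nonneg _)
      _ = (η * ξ) * (η * A) := by ring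
      _ ≤ 1 * (η * A) := mul_le_mul_of_nonneg_right hηξ.le (by positivity)
      _ = _ := one_mul _
  have t2 : η ^ 2 * D2 ≤ η * B := by
    calc η ^ 2 * D2 ≤ η ^ 2 * (ξ * B) := mul_le_mul_of_nonneg_left g2 (sq_nonneg _)
      _ = (η * ξ) * (η * B) := by ring
      _ ≤ 1 * (η * B) := mul_le_mul_of_nonneg_right hηξ.le (by positivity)
      _ = _ := one_mul _
  have t3 : 3 * (η ^ 2 * W1) ≤ η * A / 2 := by
    have : 3 * (η * W1) ≤ A / 2 := by nlinarith
    nlinarith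
  have t4 : 3 * (η ^ 2 * W2) ≤ η * B / 2 := by
    have : 3 * (η * W2) ≤ B / 2 := by nlinarith
    nlinarith
  have ab : η * payoff R x yh + η * (- payoff R xh y) = - (η * A) - η * B := by
    rw [hA, hB]; ring
  nlinarith

lemma nash_of {n : ℕ} (R : Matrix (Fin n) (Fin n) ℝ) {x y : Fin n → ℝ} (hx : IsProbVec x)
    (hy : IsProbVec y) (h : ∀ i j, rowPayoff R y i + rowPayoff (dualG R) x j ≤ 0) :
    IsNash R x y := by
  refine ⟨hx, hy, fun i => ?_, fun j => ?_⟩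
  · have : ∑ j, y j * (rowPayoff R y i + rowPayoff (dualG R) x j) ≤ 0 :=
      Finset.sum_nonpos fun j _ => mul_nonpos_of_nonneg_of_nonpos (hy.1 j) (h i j)
    simp only [mul_add, Finset.sum_add_distrib, payoff_dual] at this
    rw [← Finset.sum_mul, hy.2] at this
    linarith
  · have : ∑ i, x i * (rowPayoff R y i + rowPayoff (dualG R) x j) ≤ 0 :=
      Finset.sum_nonpos fun i _ => mul_nonpos_of_nonneg_of_nonpos (hx.1 i) (h i j)
    simp only [mul_add, Finset.sum_add_distrib, ← payoff_row] at this
    rw [← Finset.sum_mul, hx.2, rp_dual] at this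
    linarith

lemma prob_perturb {n : ℕ} {x : Fin n → ℝ} (hx : IsProbVec x) (d : Fin n → ℝ)
    (hd : ∀ i, x i = 0 → 0 ≤ d i) (hs : ∑ i, d i = 0) :
    ∀ᶠ ε in nhdsWithin (0 : ℝ) (Set.Ioi 0), IsProbVec (fun i => x i + ε * d i) := by
  have h1 : ∀ᶠ ε in nhdsWithin (0 : ℝ) (Set.Ioi 0), ∀ i, 0 ≤ x i + ε * d i := by
    rw [Filter.eventually_all]
    intro i
    rcases (hx.1 i).eq_or_lt with h | h
    · filter_upwards [self_mem_nhdsWithin] with ε hε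
      have := mul_nonneg (le_of_lt hε) (hd i h.symm)
      linarith
    · have hc : Filter.Tendsto (fun ε : ℝ => x i + ε * d i) (nhds 0) (nhds (x i + 0 * d i)) :=
        (by fun_prop : Continuous fun ε : ℝ => x i + ε * d i).tendsto 0
      have := (hc.eventually (lt_mem_nhds (by simpa using h : (0 : ℝ) < x i + 0 * d i)))
      exact (this.filter_mono nhdsWithin_le_nhds).mono fun ε h => h.le
  filter_upwards [h1] with ε h
  refine ⟨h, ?_⟩
  rw [Finset.sum_add_distrib, ← Finset.mul_sum, hs, hx.2]
  ring

lemma rigid {n : ℕ} (R : Matrix (Fin n) (Fin n) ℝ) (xs ys : Fin n → ℝ) (hNash : IsNash R xs ys)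
    (huniq : ∀ x y, IsNash R x y → x = xs ∧ y = ys) (d e : Fin n → ℝ)
    (hd : ∀ i, xs i = 0 → 0 ≤ d i) (hds : ∑ i, d i = 0)
    (he : ∀ i, ys i = 0 → 0 ≤ e i) (hes : ∑ i, e i = 0)
    (h : ∀ i j, rowPayoff R ys i + rowPayoff (dualG R) xs j = 0 →
      rowPayoff R e i + rowPayoff (dualG R) d j ≤ 0) : d = 0 ∧ e = 0 := by
  obtain ⟨hx, hy, h1, h2⟩ := hNash
  have hle : ∀ i j, rowPayoff R ys i + rowPayoff (dualG R) xs j ≤ 0 := by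
    intro i j
    have := h1 i; have := h2 j
    rw [rp_dual]; linarith
  have ev : ∀ᶠ ε in nhdsWithin (0 : ℝ) (Set.Ioi 0), ∀ i j,
      (rowPayoff R ys i + ε * rowPayoff R e i) +
        (rowPayoff (dualG R) xs j + ε * rowPayoff (dualG R) d j) ≤ 0 := by
    rw [Filter.eventually_all]
    intro i
    rw [Filter.eventually_all]
    intro j
    rcases (hle i j).eq_or_lt with h0 | h0
    · filter_upwards [self_mem_nhdsWithin] with ε hε
      have := mul_nonpos_of_nonneg_of_nonpos (le_of_lt hε) (h i j h0)
      linarith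
    · have hc := (by fun_prop : Continuous fun ε : ℝ =>
        (rowPayoff R ys i + ε * rowPayoff R e i) +
        (rowPayoff (dualG R) xs j + ε * rowPayoff (dualG R) d j)).tendsto 0
      have := hc.eventually (gt_mem_nhds (by simpa using h0 : _ < (0 : ℝ)))
      exact (this.filter_mono nhdsWithin_le_nhds).mono fun ε h => h.le
  obtain ⟨ε, ⟨⟨hp1, hp2⟩, hp3⟩, hε⟩ := (((prob_perturb hx d hd hds).and
    (prob_perturb hy e he hes)).and ev |>.and self_mem_nhdsWithin).exists
  have hε : 0 < ε := hε
  obtain ⟨q1, q2⟩ := huniq _ _ (nash_of R hp1 hp2 (by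
    intro i j
    rw [rp_add_mul, rp_add_mul]
    exact hp3 i j))
  constructor
  · funext i
    have := congrFun q1 i
    simp only [add_eq_left, mul_eq_zero, hε.ne', false_or] at this
    exact this
  · funext i
    have := congrFun q2 i
    simp only [add_eq_left, mul_eq_zero, hε.ne', false_or] at this
    exact this

lemma active_nonempty {n : ℕ} (R : Matrix (Fin n) (Fin n) ℝ) (xs ys : Fin n → ℝ)
    (hNash : IsNash R xs ys) :
    ∃ i j, rowPayoff R ys i = payoff R xs ys ∧ rowPayoff (dualG R) xs j = - payoff R xs ys := by
  obtain ⟨hx, hy, h1, h2⟩ := hNash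
  have a : ∃ i, rowPayoff R ys i = payoff R xs ys := by
    by_contra hc
    push Not at hc
    have h3 : ∀ i, rowPayoff R ys i < payoff R xs ys := fun i => lt_of_le_of_ne (h1 i) (hc i)
    obtain ⟨k, _, hk⟩ : ∃ k ∈ Finset.univ, 0 < xs k := by
      apply Finset.exists_lt_of_sum_lt
      rw [hx.2]; simp
    have : ∑ i, xs i * rowPayoff R ys i < ∑ i, xs i * payoff R xs ys :=
      Finset.sum_lt_sum (fun i _ => mul_le_mul_of_nonneg_left (h1 i) (hx.1 i))
        ⟨k, Finset.mem_univ _, mul_lt_mul_of_pos_left (h3 k) hk⟩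
    rw [← payoff_row, ← Finset.sum_mul, hx.2] at this
    linarith
  have b : ∃ j, rowPayoff (dualG R) xs j = - payoff R xs ys := by
    by_contra hc
    push Not at hc
    have h4 : ∀ j, rowPayoff (dualG R) xs j ≤ - payoff R xs ys := by
      intro j; rw [rp_dual]; have := h2 j; linarith
    have h3 : ∀ i, rowPayoff (dualG R) xs i < - payoff R xs ys :=
      fun i => lt_of_le_of_ne (h4 i) (hc i)
    obtain ⟨k, _, hk⟩ : ∃ k ∈ Finset.univ, 0 < ys k := by
      apply Finset.exists_lt_of_sum_lt
      rw [hy.2]; simp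
    have : ∑ i, ys i * rowPayoff (dualG R) xs i < ∑ i, ys i * (- payoff R xs ys) :=
      Finset.sum_lt_sum (fun i _ => mul_le_mul_of_nonneg_left (h4 i) (hy.1 i))
        ⟨k, Finset.mem_univ _, mul_lt_mul_of_pos_left (h3 k) hk⟩
    rw [payoff_dual, ← Finset.sum_mul, hy.2] at this
    linarith
  obtain ⟨i, hi⟩ := a
  obtain ⟨j, hj⟩ := b
  exact ⟨i, j, hi, hj⟩

lemma rp_continuous {n : ℕ} (R : Matrix (Fin n) (Fin n) ℝ) (i : Fin n) :
    Continuous fun y : Fin n → ℝ => rowPayoff R y i := by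
  unfold rowPayoff
  fun_prop

lemma sharp {n : ℕ} (R : Matrix (Fin n) (Fin n) ℝ) (xs ys : Fin n → ℝ) (hNash : IsNash R xs ys)
    (huniq : ∀ x y, IsNash R x y → x = xs ∧ y = ys) :
    ∃ C : ℝ, 0 ≤ C ∧ ∀ x y, IsProbVec x → IsProbVec y → ∀ ε : ℝ, 0 ≤ ε →
      (∀ i j, rowPayoff R y i + rowPayoff (dualG R) x j ≤ ε) →
      (∀ k, |x k - xs k| ≤ C * ε) ∧ ∀ k, |y k - ys k| ≤ C * ε := by
  classical
  set A : Finset (Fin n × Fin n) := Finset.univ.filter fun p =>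
    rowPayoff R ys p.1 + rowPayoff (dualG R) xs p.2 = 0 with hA
  have hAne : A.Nonempty := by
    obtain ⟨i, j, hi, hj⟩ := active_nonempty R xs ys hNash
    exact ⟨(i, j), by simp [hA, hi, hj]⟩
  set f : (Fin n → ℝ) × (Fin n → ℝ) → ℝ := fun p =>
    A.sup' hAne (fun q => rowPayoff R p.2 q.1 + rowPayoff (dualG R) p.1 q.2) with hf
  have hfc : Continuous f := by
    apply Continuous.finset_sup'_apply
    intro q _
    exact ((rp_continuous R q.1).comp continuous_snd).add
      ((rp_continuous (dualG R) q.2).comp continuous_fst)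
  set K : Set ((Fin n → ℝ) × (Fin n → ℝ)) :=
    {p | (∀ i, xs i = 0 → 0 ≤ p.1 i) ∧ (∀ i, ys i = 0 → 0 ≤ p.2 i) ∧ ∑ i, p.1 i = 0 ∧
      ∑ i, p.2 i = 0} ∩ Metric.sphere 0 1 with hK
  have hKc : IsCompact K := by
    refine (isCompact_sphere 0 1).inter_left ?_
    have c1 : ∀ i, Continuous fun p : (Fin n → ℝ) × (Fin n → ℝ) => p.1 i := fun i => by fun_prop
    have c2 : ∀ i, Continuous fun p : (Fin n → ℝ) × (Fin n → ℝ) => p.2 i := fun i => by fun_prop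
    simp only [Set.ofPred_and, Set.ofPred_forall]
    refine IsClosed.inter ?_ (IsClosed.inter ?_ (IsClosed.inter ?_ ?_))
    · exact isClosed_iInter fun i => isClosed_iInter fun _ => isClosed_le continuous_const (c1 i)
    · exact isClosed_iInter fun i => isClosed_iInter fun _ => isClosed_le continuous_const (c2 i)
    · exact isClosed_eq (continuous_finsetSum _ fun i _ => c1 i) continuous_const
    · exact isClosed_eq (continuous_finsetSum _ fun i _ => c2 i) continuous_const
  have hpos : ∀ p ∈ K, 0 < f p := by
    rintro ⟨d, e⟩ ⟨⟨k1, k2, k3, k4⟩, k5⟩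
    by_contra hc
    push Not at hc
    have := rigid R xs ys hNash huniq d e k1 k3 k2 k4 (by
      intro i j hij
      refine le_trans ?_ hc
      exact Finset.le_sup' (fun q : Fin n × Fin n => rowPayoff R e q.1 + rowPayoff (dualG R) d q.2)
        (show (i, j) ∈ A by simp [hA, hij]))
    rw [this.1, this.2] at k5
    simp at k5
  obtain ⟨c, hc0, hc⟩ : ∃ c : ℝ, 0 < c ∧ ∀ p ∈ K, c ≤ f p := by
    rcases K.eq_empty_or_nonempty with hE | hE
    · exact ⟨1, one_pos, by simp [hE]⟩
    · obtain ⟨p, hp, hmin⟩ := hKc.exists_isMinOn hE hfc.continuousOn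
      exact ⟨f p, hpos p hp, fun q hq => hmin hq⟩
  refine ⟨1 / c, by positivity, ?_⟩
  intro x y hx hy ε hε hxy
  set D : (Fin n → ℝ) × (Fin n → ℝ) := (fun k => x k - xs k, fun k => y k - ys k) with hD
  have main : ‖D‖ ≤ 1 / c * ε := by
    by_cases hD0 : D = 0
    · rw [hD0, norm_zero]; positivity
    have hDn : 0 < ‖D‖ := norm_pos_iff.2 hD0
    have hmem : (fun k => ‖D‖⁻¹ * (x k - xs k), fun k => ‖D‖⁻¹ * (y k - ys k)) ∈ K := by
      refine ⟨⟨?_, ?_, ?_, ?_⟩, ?_⟩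
      · intro i hi
        have := hx.1 i
        simp only [hi, sub_zero]; positivity
      · intro i hi
        have := hy.1 i
        simp only [hi, sub_zero]; positivity
      · simp only
        rw [← Finset.mul_sum, Finset.sum_sub_distrib, hx.2, hNash.1.2]; simp
      · simp only
        rw [← Finset.mul_sum, Finset.sum_sub_distrib, hy.2, hNash.2.1.2]; simp
      · have : ((fun k => ‖D‖⁻¹ * (x k - xs k), fun k => ‖D‖⁻¹ * (y k - ys k)) :
          (Fin n → ℝ) × (Fin n → ℝ)) = ‖D‖⁻¹ • D := by
          ext i <;> simp [hD]
        rw [this, mem_sphere_zero_iff_norm, norm_smul, norm_inv, norm_norm]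
        exact inv_mul_cancel₀ hDn.ne'
    have h1 := hc _ hmem
    obtain ⟨q, hq, hqe⟩ := Finset.exists_mem_eq_sup' hAne (fun q : Fin n × Fin n =>
      rowPayoff R (fun k => ‖D‖⁻¹ * (y k - ys k)) q.1 +
      rowPayoff (dualG R) (fun k => ‖D‖⁻¹ * (x k - xs k)) q.2)
    simp only [hf] at h1
    rw [hqe, rp_mul R (fun k => y k - ys k), rp_mul (dualG R) (fun k => x k - xs k), rp_sub,
      rp_sub, ← mul_add] at h1
    have hq0 : rowPayoff R ys q.1 + rowPayoff (dualG R) xs q.2 = 0 := by simpa [hA] using hq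
    have h2 := hxy q.1 q.2
    have h3 : c ≤ ‖D‖⁻¹ * ε :=
      h1.trans (mul_le_mul_of_nonneg_left (by linarith) (inv_nonneg.2 hDn.le))
    rw [inv_mul_eq_div, le_div_iff₀ hDn] at h3
    rw [one_div, inv_mul_eq_div, le_div_iff₀ hc0]
    linarith
  constructor
  · intro k
    exact ((norm_le_pi_norm D.1 k).trans (norm_fst_le D)).trans main
  · intro k
    exact ((norm_le_pi_norm D.2 k).trans (norm_snd_le D)).trans main

lemma flbr_eq {n : ℕ} (η ξ : ℝ) (R : Matrix (Fin n) (Fin n) ℝ)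
    (p : (Fin n → ℝ) × (Fin n → ℝ)) :
    flbrStep η ξ R p = (tiltV η p.1 (rowPayoff R (tiltV ξ p.2 (rowPayoff (dualG R) p.1))),
      tiltV η p.2 (rowPayoff (dualG R) (tiltV ξ p.1 (rowPayoff R p.2)))) := by
  have hb : brY ξ R p.1 p.2 = tiltV ξ p.2 (rowPayoff (dualG R) p.1) := by
    funext j
    simp only [brY, tiltV, rp_dual, mul_neg]
  have hm : ∀ xh, mwuY η R p.2 xh = tiltV η p.2 (rowPayoff (dualG R) xh) := by
    intro xh
    funext j
    simp only [mwuY, tiltV, rp_dual, mul_neg]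
  simp only [flbrStep]
  rw [hb, hm]
  rfl

lemma log_rec {n : ℕ} (η : ℝ) (X U : ℕ → Fin n → ℝ) (hX : ∀ t, PosVec (X t))
    (hs : ∀ t, X (t + 1) = tiltV η (X t) (U t)) (T : ℕ) (i : Fin n) :
    Real.log (X T i) = Real.log (X 0 i) + η * ∑ t ∈ Finset.range T, U t i -
      ∑ t ∈ Finset.range T, Real.log (∑ j, X t j * Real.exp (η * U t j)) := by
  induction T with
  | zero => simp
  | succ T ih =>
    rw [Finset.sum_range_succ, Finset.sum_range_succ, hs T]
    simp only [tiltV]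
    rw [Real.log_div (mul_pos ((hX T).1 i) (Real.exp_pos _)).ne' (tilt_Z_pos (hX T) _ _).ne',
      Real.log_mul ((hX T).1 i).ne' (Real.exp_pos _).ne', Real.log_exp, ih]
    ring

lemma asymp {n : ℕ} (η : ℝ) (hη : 0 < η) (X U : ℕ → Fin n → ℝ) (hX : ∀ t, PosVec (X t))
    (hs : ∀ t, X (t + 1) = tiltV η (X t) (U t)) (h0 : ∀ i k, X 0 i = X 0 k)
    (ρ : Fin n → ℝ) (v C : ℝ) (hρ : ∀ i, ρ i ≤ v) (hk : ∃ k, ρ k = v)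
    (hC : ∀ T : ℕ, ∀ i, |∑ t ∈ Finset.range T, U t i - T * ρ i| ≤ C) :
    (∀ i, ρ i = v → ∃ c > 0, ∀ T, c ≤ X T i) ∧
    (∀ i, ρ i < v → Filter.Tendsto (fun T => X T i) Filter.atTop (nhds 0)) := by
  have key : ∀ T i k, X T i ≤ X T k * Real.exp (η * (2 * C + T * (ρ i - ρ k))) := by
    intro T i k
    have a := log_rec η X U hX hs T i
    have b := log_rec η X U hX hs T k
    have ci := abs_le.1 (hC T i)
    have ck := abs_le.1 (hC T k)
    rw [h0 i k] at a
    have d : Real.log (X T i) ≤ Real.log (X T k) + η * (2 * C + T * (ρ i - ρ k)) := by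
      have : η * (∑ t ∈ Finset.range T, U t i - ∑ t ∈ Finset.range T, U t k) ≤
          η * (2 * C + T * (ρ i - ρ k)) :=
        mul_le_mul_of_nonneg_left (by linarith) hη.le
      linarith
    have e := Real.exp_le_exp.2 d
    rwa [Real.exp_add, Real.exp_log ((hX T).1 i), Real.exp_log ((hX T).1 k)] at e
  have le1 : ∀ T i, X T i ≤ 1 := by
    intro T i
    rw [← (hX T).2]
    exact Finset.single_le_sum (fun j _ => ((hX T).1 j).le) (Finset.mem_univ i)
  constructor
  · intro i hi
    have hn : 0 < n := i.pos
    have hn' : (0 : ℝ) < n := by exact_mod_cast hn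
    refine ⟨((n : ℝ) * Real.exp (η * (2 * C)))⁻¹, by positivity, fun T => ?_⟩
    have : ∑ k, X T k ≤ ∑ _k : Fin n, X T i * Real.exp (η * (2 * C)) := by
      refine Finset.sum_le_sum fun k _ => (key T k i).trans ?_
      refine mul_le_mul_of_nonneg_left (Real.exp_le_exp.2 ?_) ((hX T).1 i).le
      refine mul_le_mul_of_nonneg_left ?_ hη.le
      have : (T : ℝ) * (ρ k - ρ i) ≤ 0 :=
        mul_nonpos_of_nonneg_of_nonpos (Nat.cast_nonneg _) (by rw [hi]; linarith [hρ k])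
      linarith
    rw [(hX T).2] at this
    simp only [Finset.sum_const, Finset.card_univ, Fintype.card_fin, nsmul_eq_mul] at this
    rw [inv_le_iff_one_le_mul₀ (by positivity)]
    linarith
  · intro i hi
    obtain ⟨k, hk⟩ := hk
    have hlim : Filter.Tendsto (fun T : ℕ => Real.exp (η * (2 * C + T * (ρ i - ρ k))))
        Filter.atTop (nhds 0) := by
      refine Real.tendsto_exp_atBot.comp ?_
      refine Filter.Tendsto.const_mul_atBot hη ?_
      refine Filter.tendsto_atBot_add_const_left _ _ ?_
      exact Filter.Tendsto.atTop_mul_const_of_neg (by linarith) tendsto_natCast_atTop_atTop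
    refine squeeze_zero (fun T => ((hX T).1 i).le) (fun T => ?_) hlim
    refine (key T i k).trans ?_
    have := mul_le_mul_of_nonneg_right (le1 T k) (Real.exp_pos (η * (2 * C + T * (ρ i - ρ k)))).le
    linarith

lemma avg_prob {n : ℕ} (X : ℕ → Fin n → ℝ) (hX : ∀ t, PosVec (X t)) (T : ℕ) (hT : 0 < T) :
    IsProbVec (fun k => (T : ℝ)⁻¹ * ∑ t ∈ Finset.range T, X t k) := by
  have hT' : (0 : ℝ) < T := by exact_mod_cast hT
  refine ⟨fun i => mul_nonneg (inv_nonneg.2 hT'.le)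
    (Finset.sum_nonneg fun t _ => ((hX t).1 i).le), ?_⟩
  rw [← Finset.mul_sum, Finset.sum_comm]
  simp only [(hX _).2]
  simp [hT'.ne']

lemma rp_bdd {n : ℕ} (R : Matrix (Fin n) (Fin n) ℝ) (hR : ∀ i j, |R i j| ≤ 1) (d : Fin n → ℝ)
    (C : ℝ) (hd : ∀ k, |d k| ≤ C) (i : Fin n) : |rowPayoff R d i| ≤ n * C := by
  unfold rowPayoff
  refine (Finset.abs_sum_le_sum_abs _ _).trans ?_
  have : ∑ j, |R i j * d j| ≤ ∑ _j : Fin n, C := by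
    refine Finset.sum_le_sum fun j _ => ?_
    rw [abs_mul]
    have := mul_le_mul_of_nonneg_right (hR i j) (abs_nonneg (d j))
    linarith [hd j]
  simpa using this

lemma var_zero_const {n : ℕ} {x u : Fin n → ℝ} (hx : IsProbVec x) (h : varV x u = 0) (i : Fin n)
    (hi : 0 < x i) : u i = ∑ k, x k * u k := by
  have := (Finset.sum_eq_zero_iff_of_nonneg
    (fun i _ => mul_nonneg (hx.1 i) (sq_nonneg (u i - ∑ k, x k * u k)))).1 h i (Finset.mem_univ i)
  rcases mul_eq_zero.1 this with h | h
  · exact absurd h hi.ne'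
  · have := pow_eq_zero_iff (two_ne_zero) |>.1 h
    linarith

/-- A limit profile with the right support and zero variances is the equilibrium. -/
lemma limit_eq {n : ℕ} (R : Matrix (Fin n) (Fin n) ℝ) (xs ys : Fin n → ℝ)
    (hNash : IsNash R xs ys) (huniq : ∀ x y, IsNash R x y → x = xs ∧ y = ys) (x y : Fin n → ℝ)
    (hx : IsProbVec x) (hy : IsProbVec y)
    (hv1 : varV x (rowPayoff R y) = 0) (hv2 : varV y (rowPayoff (dualG R) x) = 0)
    (p1 : ∀ i, rowPayoff R ys i = payoff R xs ys → 0 < x i)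
    (p2 : ∀ j, rowPayoff (dualG R) xs j = - payoff R xs ys → 0 < y j) :
    x = xs ∧ y = ys := by
  set v := payoff R xs ys with hv
  have hN := hNash
  obtain ⟨hxs, hys, h1, h2⟩ := hNash
  have h2' : ∀ j, rowPayoff (dualG R) xs j ≤ - v := by
    intro j; rw [rp_dual]; have := h2 j; linarith
  set w := payoff R x y with hw
  have c1 : ∀ i, rowPayoff R ys i = v → rowPayoff R y i = w := by
    intro i hi
    rw [var_zero_const hx hv1 i (p1 i hi), ← payoff_row]
  have c2 : ∀ j, rowPayoff (dualG R) xs j = - v → rowPayoff (dualG R) x j = - w := by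
    intro i hi
    rw [var_zero_const hy hv2 i (p2 i hi), payoff_dual]
  have hwv : ∀ i j, rowPayoff R ys i + rowPayoff (dualG R) xs j = 0 →
      rowPayoff R ys i = v ∧ rowPayoff (dualG R) xs j = - v := by
    intro i j hij
    have := h1 i; have := h2' j
    constructor <;> linarith
  have := rigid R xs ys hN huniq (fun i => x i - xs i) (fun i => y i - ys i)
    (fun i hi => by simp only [hi, sub_zero]; exact hx.1 i)
    (by rw [Finset.sum_sub_distrib, hx.2, hxs.2, sub_self])
    (fun i hi => by simp only [hi, sub_zero]; exact hy.1 i)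
    (by rw [Finset.sum_sub_distrib, hy.2, hys.2, sub_self])
    (by
      intro i j hij
      obtain ⟨a, b⟩ := hwv i j hij
      rw [rp_sub, rp_sub, c1 i a, c2 j b, a, b]
      linarith)
  constructor
  · funext i
    have := congrFun this.1 i
    simp only [Pi.zero_apply] at this
    linarith
  · funext i
    have := congrFun this.2 i
    simp only [Pi.zero_apply] at this
    linarith

lemma compact_prob (n : ℕ) : IsCompact {x : Fin n → ℝ | IsProbVec x} := by
  have : {x : Fin n → ℝ | IsProbVec x} = stdSimplex ℝ (Fin n) := rfl
  rw [this]
  exact isCompact_stdSimplex ℝ (Fin n)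

lemma varV_continuous {n : ℕ} (R : Matrix (Fin n) (Fin n) ℝ) :
    Continuous fun p : (Fin n → ℝ) × (Fin n → ℝ) => varV p.1 (rowPayoff R p.2) := by
  unfold varV rowPayoff
  fun_prop

theorem flbr_core {n : ℕ} (R : Matrix (Fin n) (Fin n) ℝ)
    (hR : ∀ i j, 0 < R i j ∧ R i j ≤ 1)
    (xs ys : Fin n → ℝ) (hNash : IsNash R xs ys)
    (huniq : ∀ x y, IsNash R x y → x = xs ∧ y = ys) (η ξ : ℝ) (h0 : 0 < η) (h1 : η < 1 / 1000)
    (hξ0 : 1 / (2 * η) ≤ ξ) (hξ1 : ξ < 1 / η) (Z : ℕ → (Fin n → ℝ) × (Fin n → ℝ))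
    (hZ0 : Z 0 = (fun _ : Fin n => (n : ℝ)⁻¹, fun _ : Fin n => (n : ℝ)⁻¹))
    (hZs : ∀ t, Z (t + 1) = flbrStep η ξ R (Z t)) :
    Filter.Tendsto Z Filter.atTop (nhds (xs, ys)) := by
  have hn : (0 : ℝ) < n := by
    have := Finset.card_pos.2 hNash.1.univ_nonempty
    simp only [Finset.card_univ, Fintype.card_fin] at this
    exact_mod_cast this
  set Q := dualG R with hQ
  have hR1 : ∀ i j, |R i j| ≤ 1 := by
    intro i j; rw [abs_le]; have := hR i j; constructor <;> linarith
  have hQ1 : ∀ i j, |Q i j| ≤ 1 := by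
    intro i j; rw [abs_le]; have := hR j i; simp only [hQ, dualG]; constructor <;> linarith
  set X : ℕ → Fin n → ℝ := fun t => (Z t).1 with hXd
  set Y : ℕ → Fin n → ℝ := fun t => (Z t).2 with hYd
  set Xh : ℕ → Fin n → ℝ := fun t => tiltV ξ (X t) (rowPayoff R (Y t)) with hXh
  set Yh : ℕ → Fin n → ℝ := fun t => tiltV ξ (Y t) (rowPayoff Q (X t)) with hYh
  have hXs : ∀ t, X (t + 1) = tiltV η (X t) (rowPayoff R (Yh t)) := by
    intro t; simp only [hXd, hZs t, flbr_eq]; rfl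
  have hYs : ∀ t, Y (t + 1) = tiltV η (Y t) (rowPayoff Q (Xh t)) := by
    intro t; simp only [hYd, hZs t, flbr_eq]; rfl
  have hX0 : ∀ i, X 0 i = (n : ℝ)⁻¹ := by intro i; simp only [hXd, hZ0]
  have hY0 : ∀ i, Y 0 i = (n : ℝ)⁻¹ := by intro i; simp only [hYd, hZ0]
  have hXp : ∀ t, PosVec (X t) := by
    intro t
    induction t with
    | zero =>
      refine ⟨fun i => by rw [hX0]; positivity, ?_⟩
      simp [hX0, hn.ne']
    | succ t ih => rw [hXs]; exact tilt_pos ih _ _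
  have hYp : ∀ t, PosVec (Y t) := by
    intro t
    induction t with
    | zero =>
      refine ⟨fun i => by rw [hY0]; positivity, ?_⟩
      simp [hY0, hn.ne']
    | succ t ih => rw [hYs]; exact tilt_pos ih _ _
  have hXhp : ∀ t, PosVec (Xh t) := fun t => tilt_pos (hXp t) _ _
  have hYhp : ∀ t, PosVec (Yh t) := fun t => tilt_pos (hYp t) _ _
  set V : ℕ → ℝ := fun t => varV (X t) (rowPayoff R (Y t)) + varV (Y t) (rowPayoff Q (X t)) with hV
  have hV0 : ∀ t, 0 ≤ V t := fun t =>
    add_nonneg (varV_nonneg (hXp t).isProb _) (varV_nonneg (hYp t).isProb _)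
  set M := 2 * Real.log n with hM
  have hM0 : 0 ≤ M := by
    have : (1 : ℝ) ≤ n := by
      have : 0 < n := by exact_mod_cast hn
      exact_mod_cast this
    have := Real.log_nonneg this
    positivity
  have bound : ∀ T i j, η * (∑ t ∈ Finset.range T, rowPayoff R (Yh t) i +
      ∑ t ∈ Finset.range T, rowPayoff Q (Xh t) j) + η ^ 2 * ∑ t ∈ Finset.range T, V t ≤ M := by
    intro T i j
    have a := log_rec η X (fun t => rowPayoff R (Yh t)) hXp hXs T i
    have b := log_rec η Y (fun t => rowPayoff Q (Xh t)) hYp hYs T j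
    have le1 : ∀ (x : Fin n → ℝ), PosVec x → ∀ i, Real.log (x i) ≤ 0 := by
      intro x hx i
      refine Real.log_nonpos (hx.1 i).le ?_
      rw [← hx.2]
      exact Finset.single_le_sum (fun j _ => (hx.1 j).le) (Finset.mem_univ i)
    have a' := le1 _ (hXp T) i
    have b' := le1 _ (hYp T) j
    rw [a, hX0, Real.log_inv] at a'
    rw [b, hY0, Real.log_inv] at b'
    have c : ∑ t ∈ Finset.range T,
        (Real.log (∑ j, X t j * Real.exp (η * rowPayoff R (Yh t) j)) +
         Real.log (∑ j, Y t j * Real.exp (η * rowPayoff Q (Xh t) j))) ≤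
        ∑ t ∈ Finset.range T, (- η ^ 2 * V t) :=
      Finset.sum_le_sum fun t _ => key_step R hR (hXp t) (hYp t) η ξ h0 h1 hξ0 hξ1
    rw [Finset.sum_add_distrib, ← Finset.mul_sum] at c
    linarith
  -- variances are summable
  have hnn : ∀ T : ℕ, ∑ t ∈ Finset.range T, V t ≤ M / η ^ 2 := by
    intro T
    have hz : ∃ i j, 0 ≤ ∑ t ∈ Finset.range T, rowPayoff R (Yh t) i +
      ∑ t ∈ Finset.range T, rowPayoff Q (Xh t) j := by
      by_contra hc
      push Not at hc
      set y := fun k => ∑ t ∈ Finset.range T, Yh t k with hy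
      set x := fun k => ∑ t ∈ Finset.range T, Xh t k with hx
      have hsum : ∀ (W : ℕ → Fin n → ℝ), (∀ t, PosVec (W t)) →
          ∑ k, ∑ t ∈ Finset.range T, W t k = T := by
        intro W hW
        rw [Finset.sum_comm]; simp [(hW _).2]
      have s1 : 0 ≤ ∑ i, xs i * rowPayoff R y i - T * payoff R xs ys := by
        rw [← payoff_row, ← neg_neg (payoff R xs y), ← payoff_dual, ← hsum Yh hYhp, Finset.sum_mul,
          ← Finset.sum_neg_distrib, ← Finset.sum_sub_distrib]
        refine Finset.sum_nonneg fun k _ => ?_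
        have h3 : 0 ≤ y k := Finset.sum_nonneg fun t _ => ((hYhp t).1 k).le
        have h4 := mul_le_mul_of_nonneg_left (hNash.2.2.2 k) h3
        rw [rp_dual]
        linarith
      have s2 : 0 ≤ ∑ j, ys j * rowPayoff Q x j + T * payoff R xs ys := by
        rw [hQ, payoff_dual, payoff_row, ← hsum Xh hXhp, Finset.sum_mul,
          ← Finset.sum_neg_distrib, ← Finset.sum_add_distrib]
        refine Finset.sum_nonneg fun k _ => ?_
        have h3 : 0 ≤ x k := Finset.sum_nonneg fun t _ => ((hXhp t).1 k).le
        have h4 := mul_le_mul_of_nonneg_left (hNash.2.2.1 k) h3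
        linarith
      have hc' : ∀ i j, rowPayoff R y i + rowPayoff Q x j < 0 := by
        intro i j
        rw [hy, hx, rp_sum, rp_sum]; exact hc i j
      have hneg : ∃ i, ∑ i, xs i * rowPayoff R y i ≤ rowPayoff R y i := by
        by_contra hh
        push Not at hh
        obtain ⟨k, _, hk⟩ : ∃ k ∈ Finset.univ, 0 < xs k := by
          apply Finset.exists_lt_of_sum_lt
          rw [hNash.1.2]; simp
        have : ∑ i, xs i * rowPayoff R y i < ∑ i, xs i * (∑ i, xs i * rowPayoff R y i) :=
          Finset.sum_lt_sum (fun i _ => mul_le_mul_of_nonneg_left (hh i).le (hNash.1.1 i))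
            ⟨k, Finset.mem_univ _, mul_lt_mul_of_pos_left (hh k) hk⟩
        rw [← Finset.sum_mul, hNash.1.2] at this
        linarith
      obtain ⟨i, hi⟩ := hneg
      have hj : ∑ j, ys j * (rowPayoff R y i + rowPayoff Q x j) ≤ 0 :=
        Finset.sum_nonpos fun j _ => mul_nonpos_of_nonneg_of_nonpos (hNash.2.1.1 j) (hc' i j).le
      simp only [mul_add, Finset.sum_add_distrib] at hj
      rw [← Finset.sum_mul, hNash.2.1.2] at hj
      -- all nonnegative sums vanish; use strictness
      obtain ⟨k, _, hk⟩ : ∃ k ∈ Finset.univ, 0 < ys k := by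
        apply Finset.exists_lt_of_sum_lt
        rw [hNash.2.1.2]; simp
      have hj' : ∑ j, ys j * (rowPayoff R y i + rowPayoff Q x j) < ∑ j, ys j * 0 :=
        Finset.sum_lt_sum (fun j _ => mul_le_mul_of_nonneg_left (hc' i j).le (hNash.2.1.1 j))
          ⟨k, Finset.mem_univ _, mul_lt_mul_of_pos_left (hc' i k) hk⟩
      simp only [mul_add, Finset.sum_add_distrib, mul_zero, Finset.sum_const_zero] at hj'
      rw [← Finset.sum_mul, hNash.2.1.2] at hj'
      linarith
    obtain ⟨i, j, hij⟩ := hz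
    have := bound T i j
    have h3 := mul_nonneg h0.le hij
    rw [le_div_iff₀ (by positivity)]
    linarith
  have hVt : Filter.Tendsto V Filter.atTop (nhds 0) :=
    (summable_of_sum_range_le hV0 hnn).tendsto_atTop_zero
  -- sharpness
  obtain ⟨C, hC0, hC⟩ := sharp R xs ys hNash huniq
  have hdev : ∀ T : ℕ, (∀ k, |∑ t ∈ Finset.range T, Xh t k - T * xs k| ≤ C * (M / η)) ∧
      ∀ k, |∑ t ∈ Finset.range T, Yh t k - T * ys k| ≤ C * (M / η) := by
    intro T
    rcases Nat.eq_zero_or_pos T with rfl | hT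
    · have : 0 ≤ C * (M / η) := by positivity
      simp [this]
    have hT' : (0 : ℝ) < T := by exact_mod_cast hT
    have := hC _ _ (avg_prob Xh hXhp T hT) (avg_prob Yh hYhp T hT) ((T : ℝ)⁻¹ * (M / η))
      (by positivity) (by
        intro i j
        rw [rp_mul R (fun k => ∑ t ∈ Finset.range T, Yh t k),
          rp_mul (dualG R) (fun k => ∑ t ∈ Finset.range T, Xh t k), rp_sum, rp_sum, ← mul_add]
        refine mul_le_mul_of_nonneg_left ?_ (by positivity)
        rw [le_div_iff₀ h0]
        have h3 := bound T i j
        have h4 : 0 ≤ η ^ 2 * ∑ t ∈ Finset.range T, V t :=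
          mul_nonneg (sq_nonneg _) (Finset.sum_nonneg fun t _ => hV0 t)
        linarith)
    have scale : ∀ a b : ℝ, |(T : ℝ)⁻¹ * a - b| ≤ C * ((T : ℝ)⁻¹ * (M / η)) →
        |a - T * b| ≤ C * (M / η) := by
      intro a b hab
      have e : a - T * b = T * ((T : ℝ)⁻¹ * a - b) := by field_simp
      rw [e, abs_mul, abs_of_pos hT']
      calc _ ≤ T * (C * ((T : ℝ)⁻¹ * (M / η))) := mul_le_mul_of_nonneg_left hab hT'.le
        _ = _ := by field_simp
    exact ⟨fun k => scale _ _ (this.1 k), fun k => scale _ _ (this.2 k)⟩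
  have hrow : ∀ T : ℕ, ∀ i, |∑ t ∈ Finset.range T, rowPayoff R (Yh t) i - T * rowPayoff R ys i| ≤
      n * (C * (M / η)) := by
    intro T i
    have := rp_bdd R hR1 (fun k => ∑ t ∈ Finset.range T, Yh t k - T * ys k) _ (hdev T).2 i
    rwa [rp_sub R (fun k => ∑ t ∈ Finset.range T, Yh t k) (fun k => T * ys k), rp_sum,
      rp_mul] at this
  have hcol : ∀ T : ℕ, ∀ i, |∑ t ∈ Finset.range T, rowPayoff Q (Xh t) i - T * rowPayoff Q xs i| ≤
      n * (C * (M / η)) := by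
    intro T i
    have := rp_bdd Q hQ1 (fun k => ∑ t ∈ Finset.range T, Xh t k - T * xs k) _ (hdev T).1 i
    rwa [rp_sub Q (fun k => ∑ t ∈ Finset.range T, Xh t k) (fun k => T * xs k), rp_sum,
      rp_mul] at this
  obtain ⟨i0, j0, hi0, hj0⟩ := active_nonempty R xs ys hNash
  have asX := asymp η h0 X (fun t => rowPayoff R (Yh t)) hXp hXs (by intro i k; rw [hX0, hX0])
    (rowPayoff R ys) (payoff R xs ys) _ hNash.2.2.1 ⟨i0, hi0⟩ hrow
  have asY := asymp η h0 Y (fun t => rowPayoff Q (Xh t)) hYp hYs (by intro i k; rw [hY0, hY0])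
    (rowPayoff Q xs) (- payoff R xs ys) _
    (by intro j; rw [hQ, rp_dual]; linarith [hNash.2.2.2 j]) ⟨j0, hj0⟩ hcol
  -- compactness
  refine ((compact_prob n).prod (compact_prob n)).tendsto_nhds_of_unique_mapClusterPt
    (Filter.Eventually.of_forall fun t => ⟨(hXp t).isProb, (hYp t).isProb⟩) ?_
  rintro ⟨x, y⟩ ⟨hx, hy⟩ hcl
  have hx : IsProbVec x := hx
  have hy : IsProbVec y := hy
  have lim_of : ∀ (g : (Fin n → ℝ) × (Fin n → ℝ) → ℝ), Continuous g → ∀ a : ℝ,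
      Filter.Tendsto (fun t => g (Z t)) Filter.atTop (nhds a) → g (x, y) = a := by
    intro g hg a ha
    have h3 : MapClusterPt (g (x, y)) Filter.atTop (fun t => g (Z t)) :=
      hcl.continuousAt_comp hg.continuousAt
    exact eq_of_nhds_neBot (Filter.NeBot.mono h3 (inf_le_inf_left _ ha))
  have ge_of : ∀ (g : (Fin n → ℝ) × (Fin n → ℝ) → ℝ), Continuous g → ∀ a : ℝ,
      (∀ t, a ≤ g (Z t)) → a ≤ g (x, y) := by
    intro g hg a ha
    have hcl' : IsClosed {p | a ≤ g p} := isClosed_le continuous_const hg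
    exact hcl'.mem_of_mapClusterPt hcl (Filter.Eventually.of_forall ha)
  have cV : Continuous fun p : (Fin n → ℝ) × (Fin n → ℝ) =>
      varV p.1 (rowPayoff R p.2) + varV p.2 (rowPayoff Q p.1) :=
    (varV_continuous R).add ((varV_continuous Q).comp continuous_swap)
  have v0 := lim_of _ cV 0 hVt
  have n1 := varV_nonneg hx (rowPayoff R y)
  have n2 := varV_nonneg hy (rowPayoff Q x)
  simp only at v0
  obtain ⟨r1, r2⟩ := limit_eq R xs ys hNash huniq x y hx hy (by linarith)
    (by rw [← hQ]; linarith)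
    (by
      intro i hi
      obtain ⟨c, hc, hcT⟩ := asX.1 i hi
      exact hc.trans_le (ge_of (fun p => p.1 i) (by fun_prop) c hcT))
    (by
      intro j hj
      obtain ⟨c, hc, hcT⟩ := asY.1 j hj
      exact hc.trans_le (ge_of (fun p => p.2 j) (by fun_prop) c hcT))
  rw [r1, r2]

/-- For a zero-sum game with payoff matrix `R` having all entries in `(0,1]`
and a unique Nash equilibrium `(xs, ys)`, there is `η₀ ∈ (0,1)` such that for every
`η ∈ (0,η₀)` there is `ξ₀ ∈ (0, 1/η)` such that for every `ξ ∈ [ξ₀, 1/η)` (so `ηξ < 1`),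
the FLBR-MWU iterates started from the uniform profile converge to `(xs, ys)`. -/
theorem flbr_mwu_last_iterate_convergence {n : ℕ} (R : Matrix (Fin n) (Fin n) ℝ)
    (hR : ∀ i j, 0 < R i j ∧ R i j ≤ 1)
    (xs ys : Fin n → ℝ) (hNash : IsNash R xs ys)
    (huniq : ∀ x y, IsNash R x y → x = xs ∧ y = ys) :
    ∃ η₀ ∈ Set.Ioo (0 : ℝ) 1, ∀ η ∈ Set.Ioo (0 : ℝ) η₀, ∃ ξ₀ ∈ Set.Ioo (0 : ℝ) (1 / η),
      ∀ ξ ∈ Set.Ico ξ₀ (1 / η),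
        Filter.Tendsto
          (fun t : ℕ => (flbrStep η ξ R)^[t] (fun _ : Fin n => (n : ℝ)⁻¹, fun _ : Fin n => (n : ℝ)⁻¹))
          Filter.atTop (nhds (xs, ys)) := by
  refine ⟨1 / 1000, by norm_num, ?_⟩
  rintro η ⟨h0, h1⟩
  have hlt : 1 / (2 * η) < 1 / η := by
    apply one_div_lt_one_div_of_lt h0; linarith
  refine ⟨1 / (2 * η), ⟨by positivity, hlt⟩, ?_⟩
  rintro ξ ⟨hξ0, hξ1⟩
  refine flbr_core R hR xs ys hNash huniq η ξ h0 h1 hξ0 hξ1 _ rfl ?_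
  intro t
  exact Function.iterate_succ_apply' _ _ _
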